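/- arXiv:1804.07977 — 3 statements merged into one kernel-verified Lean document; each statement's English description precedes it below -/
import Mathlib

section
/- Let φ : (0,∞) → (0,∞) be continuous with s ↦ s·φ(s) integrable near 0, let Φ(t) = ∫₀^{|t|} s·φ(s) ds, and let 1 < l ≤ m be constants such that l ≤ φ(t)·t²/Φ(t) ≤ m for all t > 0. Then for all ρ > 0 and t > 0 one has min{t^l, t^m}·Φ(ρ) ≤ Φ(ρ·t) ≤ max{t^l, t^m}·Φ(ρ). -/
open Real MeasureTheory Set Filter Topology

/-- Lemma 2.1 (comparison inequalities for an N-function Φ satisfying (φ₃)'):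
if `l ≤ φ(t)·t²/Φ(t) ≤ m` for all `t > 0`, then
`min{t^l, t^m}·Φ(ρ) ≤ Φ(ρ·t) ≤ max{t^l, t^m}·Φ(ρ)` for all `ρ, t > 0`. -/
theorem stmt_0 (φ Φ : ℝ → ℝ) (l m : ℝ)
    (hφcont : ContinuousOn φ (Set.Ioi (0 : ℝ)))
    (hφpos : ∀ t > (0 : ℝ), 0 < φ t)
    (hint : MeasureTheory.IntegrableOn (fun s : ℝ => s * φ s) (Set.Ioc (0 : ℝ) 1))
    (hΦ : ∀ t : ℝ, Φ t = ∫ s in (0 : ℝ)..|t|, s * φ s)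
    (hl : 1 < l) (hlm : l ≤ m)
    (hφ3 : ∀ t > (0 : ℝ), l ≤ φ t * t ^ 2 / Φ t ∧ φ t * t ^ 2 / Φ t ≤ m) :
    ∀ ρ > (0 : ℝ), ∀ t > (0 : ℝ),
      min (t ^ l) (t ^ m) * Φ ρ ≤ Φ (ρ * t) ∧
      Φ (ρ * t) ≤ max (t ^ l) (t ^ m) * Φ ρ := by
  have hfc : ContinuousOn (fun s : ℝ => s * φ s) (Set.Ioi (0 : ℝ)) := continuousOn_id.mul hφcont
  have hpos : ∀ t > (0 : ℝ), 0 < Φ t := by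
    intro t ht
    by_contra h
    have h1 : φ t * t ^ 2 / Φ t ≤ 0 :=
      div_nonpos_of_nonneg_of_nonpos (mul_nonneg (hφpos t ht).le (sq_nonneg t)) (not_lt.mp h)
    linarith [(hφ3 t ht).1]
  have hder : ∀ t > (0 : ℝ), HasDerivAt Φ (t * φ t) t := by
    intro t ht
    have hii : IntervalIntegrable (fun s : ℝ => s * φ s) volume 0 t := by
      have h1 : IntervalIntegrable (fun s : ℝ => s * φ s) volume 0 1 :=
        (intervalIntegrable_iff_integrableOn_Ioc_of_le zero_le_one).2 hint
      refine h1.trans (ContinuousOn.intervalIntegrable (hfc.mono ?_))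
      intro x hx
      exact lt_of_lt_of_le (lt_min one_pos ht) hx.1
    have h := intervalIntegral.integral_hasDerivAt_right hii
      (hfc.stronglyMeasurableAtFilter isOpen_Ioi t ht) (hfc.continuousAt (Ioi_mem_nhds ht))
    refine h.congr_of_eventuallyEq ?_
    filter_upwards [Ioi_mem_nhds ht] with u hu
    rw [hΦ u, abs_of_pos hu]
  have hder2 : ∀ p : ℝ, ∀ x > (0 : ℝ), HasDerivAt (fun x => Φ x * x ^ (-p))
      (x ^ (-p - 1) * (φ x * x ^ 2 - p * Φ x)) x := by
    intro p x hx
    have h := (hder x hx).mul (Real.hasDerivAt_rpow_const (p := -p) (Or.inl hx.ne'))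
    refine h.congr_deriv ?_
    have : x ^ (-p) = x ^ (-p - 1) * x := by
      rw [← Real.rpow_add_one hx.ne']; ring_nf
    rw [this]; ring
  have hmono : MonotoneOn (fun x => Φ x * x ^ (-l)) (Set.Ioi 0) := by
    refine monotoneOn_of_deriv_nonneg (convex_Ioi 0)
      (fun x hx => (hder2 l x hx).continuousAt.continuousWithinAt) ?_ ?_
    · rw [interior_Ioi]
      exact fun x hx => (hder2 l x hx).differentiableAt.differentiableWithinAt
    · rw [interior_Ioi]
      intro x hx
      rw [(hder2 l x hx).deriv]
      have := (le_div_iff₀ (hpos x hx)).1 (hφ3 x hx).1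
      exact mul_nonneg (Real.rpow_nonneg (le_of_lt hx) _) (by linarith)
  have hanti : AntitoneOn (fun x => Φ x * x ^ (-m)) (Set.Ioi 0) := by
    refine antitoneOn_of_deriv_nonpos (convex_Ioi 0)
      (fun x hx => (hder2 m x hx).continuousAt.continuousWithinAt) ?_ ?_
    · rw [interior_Ioi]
      exact fun x hx => (hder2 m x hx).differentiableAt.differentiableWithinAt
    · rw [interior_Ioi]
      intro x hx
      rw [(hder2 m x hx).deriv]
      have := (div_le_iff₀ (hpos x hx)).1 (hφ3 x hx).2
      exact mul_nonpos_of_nonneg_of_nonpos (Real.rpow_nonneg (le_of_lt hx) _) (by linarith)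
  intro ρ hρ t ht
  have hρt : 0 < ρ * t := mul_pos hρ ht
  have hΦρ := (hpos ρ hρ).le
  have e : ∀ p : ℝ, Φ (ρ * t) = Φ (ρ * t) * (ρ * t) ^ (-p) * (ρ ^ p * t ^ p) := by
    intro p
    rw [← Real.mul_rpow hρ.le ht.le, mul_assoc, ← Real.rpow_add hρt]; simp
  have e2 : ∀ p : ℝ, t ^ p * Φ ρ = Φ ρ * ρ ^ (-p) * (ρ ^ p * t ^ p) := by
    intro p
    have : ρ ^ (-p) * ρ ^ p = 1 := by rw [← Real.rpow_add hρ]; simp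
    linear_combination (-(t ^ p * Φ ρ)) * this
  have hc : ∀ p : ℝ, 0 ≤ ρ ^ p * t ^ p := fun p =>
    mul_nonneg (Real.rpow_nonneg hρ.le _) (Real.rpow_nonneg ht.le _)
  rcases le_total 1 t with h1 | h1
  · have hle : ρ ≤ ρ * t := le_mul_of_one_le_right hρ.le h1
    have a := mul_le_mul_of_nonneg_right (hmono hρ hρt hle) (hc l)
    have b := mul_le_mul_of_nonneg_right (hanti hρ hρt hle) (hc m)
    simp only [] at a b
    rw [← e, ← e2] at a b
    exact ⟨(mul_le_mul_of_nonneg_right (min_le_left _ _) hΦρ).trans a,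
      b.trans (mul_le_mul_of_nonneg_right (le_max_right _ _) hΦρ)⟩
  · have hle : ρ * t ≤ ρ := mul_le_of_le_one_right hρ.le h1
    have a := mul_le_mul_of_nonneg_right (hmono hρt hρ hle) (hc l)
    have b := mul_le_mul_of_nonneg_right (hanti hρt hρ hle) (hc m)
    simp only [] at a b
    rw [← e, ← e2] at a b
    exact ⟨(mul_le_mul_of_nonneg_right (min_le_right _ _) hΦρ).trans b,
      a.trans (mul_le_mul_of_nonneg_right (le_max_left _ _) hΦρ)⟩
end

section
/- Let (Ω, μ) be a measure space and let u : Ω → ℝ be measurable with 0 < |u|_{L^Φ} < ∞, where |u|_{L^Φ} denotes the Luxemburg norm of u. Then min{|u|_{L^Φ}^l, |u|_{L^Φ}^m} ≤ ∫_Ω Φ(u(x)) dμ(x) ≤ max{|u|_{L^Φ}^l, |u|_{L^Φ}^m}. -/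
open Real MeasureTheory Set Filter Topology

theorem aux_int (φ : ℝ → ℝ) (hφcont : ContinuousOn φ (Set.Ioi (0 : ℝ)))
    (hint : MeasureTheory.IntegrableOn (fun s : ℝ => s * φ s) (Set.Ioc (0 : ℝ) 1))
    (t : ℝ) (ht : 0 < t) : IntervalIntegrable (fun s : ℝ => s * φ s) volume 0 t := by
  have h1 : IntervalIntegrable (fun s : ℝ => s * φ s) volume 0 1 :=
    (intervalIntegrable_iff_integrableOn_Ioc_of_le zero_le_one).2 hint
  refine h1.trans ?_
  apply ContinuousOn.intervalIntegrable
  refine continuousOn_id.mul (hφcont.mono ?_)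
  intro x hx
  exact lt_of_lt_of_le (lt_min one_pos ht) hx.1

theorem aux_pos (φ Φ : ℝ → ℝ) (l m : ℝ)
    (hφpos : ∀ t > (0 : ℝ), 0 < φ t) (hl : 1 < l)
    (hφ3 : ∀ t > (0 : ℝ), l ≤ φ t * t ^ 2 / Φ t ∧ φ t * t ^ 2 / Φ t ≤ m)
    (t : ℝ) (ht : 0 < t) : 0 < Φ t := by
  by_contra! h
  have h1 := (hφ3 t ht).1
  have h2 : φ t * t ^ 2 / Φ t ≤ 0 :=
    div_nonpos_of_nonneg_of_nonpos (mul_nonneg (hφpos t ht).le (sq_nonneg t)) h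
  linarith

theorem aux_deriv (φ Φ : ℝ → ℝ)
    (hφcont : ContinuousOn φ (Set.Ioi (0 : ℝ)))
    (hint : MeasureTheory.IntegrableOn (fun s : ℝ => s * φ s) (Set.Ioc (0 : ℝ) 1))
    (hΦ : ∀ t : ℝ, Φ t = ∫ s in (0 : ℝ)..|t|, s * φ s)
    (t : ℝ) (ht : 0 < t) : HasDerivAt Φ (t * φ t) t := by
  have hc : ContinuousOn (fun s : ℝ => s * φ s) (Set.Ioi 0) := continuousOn_id.mul hφcont
  have h := intervalIntegral.integral_hasDerivAt_right (aux_int φ hφcont hint t ht)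
    (hc.stronglyMeasurableAtFilter isOpen_Ioi t ht) (hc.continuousAt (Ioi_mem_nhds ht))
  refine h.congr_of_eventuallyEq ?_
  filter_upwards [Ioi_mem_nhds ht] with x hx
  rw [hΦ x, abs_of_pos hx]

theorem aux_deriv2 (φ Φ : ℝ → ℝ)
    (hφcont : ContinuousOn φ (Set.Ioi (0 : ℝ)))
    (hint : MeasureTheory.IntegrableOn (fun s : ℝ => s * φ s) (Set.Ioc (0 : ℝ) 1))
    (hΦ : ∀ t : ℝ, Φ t = ∫ s in (0 : ℝ)..|t|, s * φ s) (p : ℝ)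
    (t : ℝ) (ht : 0 < t) :
    HasDerivAt (fun x => Φ x * x ^ (-p)) (t ^ (-p - 1) * (φ t * t ^ 2 - p * Φ t)) t := by
  have h := (aux_deriv φ Φ hφcont hint hΦ t ht).mul
    (Real.hasDerivAt_rpow_const (p := -p) (Or.inl ht.ne'))
  have : t ^ (-p) = t ^ (-p - 1) * t := by
    rw [← Real.rpow_add_one ht.ne']; congr 1; ring
  have e : t * φ t * t ^ (-p) + Φ t * (-p * t ^ (-p - 1)) =
      t ^ (-p - 1) * (φ t * t ^ 2 - p * Φ t) := by
    rw [this]; ring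
  rw [← e]
  exact h

theorem aux_mono (φ Φ : ℝ → ℝ) (l m : ℝ)
    (hφcont : ContinuousOn φ (Set.Ioi (0 : ℝ)))
    (hφpos : ∀ t > (0 : ℝ), 0 < φ t)
    (hint : MeasureTheory.IntegrableOn (fun s : ℝ => s * φ s) (Set.Ioc (0 : ℝ) 1))
    (hΦ : ∀ t : ℝ, Φ t = ∫ s in (0 : ℝ)..|t|, s * φ s)
    (hl : 1 < l)
    (hφ3 : ∀ t > (0 : ℝ), l ≤ φ t * t ^ 2 / Φ t ∧ φ t * t ^ 2 / Φ t ≤ m) :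
    MonotoneOn (fun x => Φ x * x ^ (-l)) (Set.Ioi 0) ∧
    AntitoneOn (fun x => Φ x * x ^ (-m)) (Set.Ioi 0) := by
  have hd := aux_deriv2 φ Φ hφcont hint hΦ
  have hp := aux_pos φ Φ l m hφpos hl hφ3
  constructor
  · apply monotoneOn_of_deriv_nonneg (convex_Ioi 0)
    · exact fun x hx => (hd l x hx).continuousAt.continuousWithinAt
    · rw [interior_Ioi]
      exact fun x hx => (hd l x hx).differentiableAt.differentiableWithinAt
    · rw [interior_Ioi]
      intro x hx
      rw [(hd l x hx).deriv]
      have := (le_div_iff₀ (hp x hx)).1 (hφ3 x hx).1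
      exact mul_nonneg (Real.rpow_nonneg (le_of_lt hx) _) (by linarith)
  · apply antitoneOn_of_deriv_nonpos (convex_Ioi 0)
    · exact fun x hx => (hd m x hx).continuousAt.continuousWithinAt
    · rw [interior_Ioi]
      exact fun x hx => (hd m x hx).differentiableAt.differentiableWithinAt
    · rw [interior_Ioi]
      intro x hx
      rw [(hd m x hx).deriv]
      have := (div_le_iff₀ (hp x hx)).1 (hφ3 x hx).2
      exact mul_nonpos_of_nonneg_of_nonpos (Real.rpow_nonneg (le_of_lt hx) _) (by linarith)

theorem aux_scale (Φ : ℝ → ℝ) (p s t : ℝ) (hs : 0 < s) (ht : 0 < t) :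
    (s ^ p * Φ t ≤ Φ (s * t) ↔ Φ t * t ^ (-p) ≤ Φ (s * t) * (s * t) ^ (-p)) ∧
    (Φ (s * t) ≤ s ^ p * Φ t ↔ Φ (s * t) * (s * t) ^ (-p) ≤ Φ t * t ^ (-p)) := by
  have h1 : (0:ℝ) < t ^ p := Real.rpow_pos_of_pos ht _
  have h2 : (0:ℝ) < s ^ p := Real.rpow_pos_of_pos hs _
  rw [Real.mul_rpow hs.le ht.le, Real.rpow_neg hs.le, Real.rpow_neg ht.le]
  have e : Φ t * (t ^ p)⁻¹ = (s ^ p * Φ t) * ((s ^ p)⁻¹ * (t ^ p)⁻¹) := by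
    field_simp
  have h3 : 0 < (s ^ p)⁻¹ * (t ^ p)⁻¹ := by positivity
  rw [e]
  exact ⟨(mul_le_mul_iff_left₀ h3).symm, (mul_le_mul_iff_left₀ h3).symm⟩

theorem aux_growth (φ Φ : ℝ → ℝ) (l m : ℝ)
    (hφcont : ContinuousOn φ (Set.Ioi (0 : ℝ)))
    (hφpos : ∀ t > (0 : ℝ), 0 < φ t)
    (hint : MeasureTheory.IntegrableOn (fun s : ℝ => s * φ s) (Set.Ioc (0 : ℝ) 1))
    (hΦ : ∀ t : ℝ, Φ t = ∫ s in (0 : ℝ)..|t|, s * φ s)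
    (hl : 1 < l)
    (hφ3 : ∀ t > (0 : ℝ), l ≤ φ t * t ^ 2 / Φ t ∧ φ t * t ^ 2 / Φ t ≤ m)
    (s t : ℝ) (hs : 0 < s) :
    min (s ^ l) (s ^ m) * Φ t ≤ Φ (s * t) ∧ Φ (s * t) ≤ max (s ^ l) (s ^ m) * Φ t := by
  have habs : ∀ t, Φ |t| = Φ t := fun t => by rw [hΦ, hΦ t, abs_abs]
  have h0 : Φ 0 = 0 := by rw [hΦ]; simp
  suffices H : ∀ t, 0 < t → min (s ^ l) (s ^ m) * Φ t ≤ Φ (s * t) ∧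
      Φ (s * t) ≤ max (s ^ l) (s ^ m) * Φ t by
    by_cases h : t = 0
    · subst h; simp [h0]
    · have := H |t| (abs_pos.2 h)
      rwa [habs, ← abs_of_pos hs, ← abs_mul, habs, abs_of_pos hs] at this
  intro t ht
  obtain ⟨hm, ha⟩ := aux_mono φ Φ l m hφcont hφpos hint hΦ hl hφ3
  have hp := (aux_pos φ Φ l m hφpos hl hφ3 t ht).le
  have hst : 0 < s * t := mul_pos hs ht
  rcases le_total 1 s with h | h
  · have hle : t ≤ s * t := le_mul_of_one_le_left ht.le h
    have a := (aux_scale Φ l s t hs ht).1.2 (hm ht hst hle)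
    have b := (aux_scale Φ m s t hs ht).2.2 (ha ht hst hle)
    exact ⟨(mul_le_mul_of_nonneg_right (min_le_left _ _) hp).trans a,
      b.trans (mul_le_mul_of_nonneg_right (le_max_right _ _) hp)⟩
  · have hle : s * t ≤ t := mul_le_of_le_one_left ht.le h
    have a := (aux_scale Φ m s t hs ht).1.2 (ha hst ht hle)
    have b := (aux_scale Φ l s t hs ht).2.2 (hm hst ht hle)
    exact ⟨(mul_le_mul_of_nonneg_right (min_le_right _ _) hp).trans a,
      b.trans (mul_le_mul_of_nonneg_right (le_max_left _ _) hp)⟩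

theorem aux_meas (φ Φ : ℝ → ℝ)
    (hφcont : ContinuousOn φ (Set.Ioi (0 : ℝ)))
    (hint : MeasureTheory.IntegrableOn (fun s : ℝ => s * φ s) (Set.Ioc (0 : ℝ) 1))
    (hΦ : ∀ t : ℝ, Φ t = ∫ s in (0 : ℝ)..|t|, s * φ s) : Measurable Φ := by
  have habs : ∀ t, Φ |t| = Φ t := fun t => by rw [hΦ, hΦ t, abs_abs]
  have hc : ∀ t, t ≠ 0 → ContinuousAt Φ t := by
    intro t ht
    have h1 : ContinuousAt Φ |t| :=
      (aux_deriv φ Φ hφcont hint hΦ |t| (abs_pos.2 ht)).continuousAt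
    have h2 : ContinuousAt (fun x => Φ |x|) t := 
      ContinuousAt.comp (g := Φ) (f := fun x : ℝ => |x|) h1 continuous_abs.continuousAt
    simpa only [habs] using h2
  refine measurable_of_continuousOn_compl_singleton 0 ?_
  exact fun x hx => (hc x hx).continuousWithinAt

/-- Lemma 2.1, second part: for a measurable `u` with finite positive Luxemburg norm
`|u|_{L^Φ}`, one has `min{|u|^l, |u|^m} ≤ ∫ Φ(u) ≤ max{|u|^l, |u|^m}`. -/
theorem stmt_1 {Ω : Type*} [MeasurableSpace Ω] (μ : Measure Ω)
    (φ Φ : ℝ → ℝ) (l m : ℝ)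
    (hφcont : ContinuousOn φ (Set.Ioi (0 : ℝ)))
    (hφpos : ∀ t > (0 : ℝ), 0 < φ t)
    (hint : MeasureTheory.IntegrableOn (fun s : ℝ => s * φ s) (Set.Ioc (0 : ℝ) 1))
    (hΦ : ∀ t : ℝ, Φ t = ∫ s in (0 : ℝ)..|t|, s * φ s)
    (hl : 1 < l) (hlm : l ≤ m)
    (hφ3 : ∀ t > (0 : ℝ), l ≤ φ t * t ^ 2 / Φ t ∧ φ t * t ^ 2 / Φ t ≤ m)
    (u : Ω → ℝ) (hu : Measurable u) (N : ℝ)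
    -- `N` is the Luxemburg norm `|u|_{L^Φ}`:
    (hN : N = sInf {lam : ℝ | 0 < lam ∧ ∫ x, Φ (u x / lam) ∂μ ≤ 1})
    -- `0 < |u|_{L^Φ}`:
    (hNpos : 0 < N)
    -- `|u|_{L^Φ} < ∞`, i.e. the defining set is nonempty:
    (hfin : {lam : ℝ | 0 < lam ∧ ∫ x, Φ (u x / lam) ∂μ ≤ 1}.Nonempty) :
    min (N ^ l) (N ^ m) ≤ ∫ x, Φ (u x) ∂μ ∧
    ∫ x, Φ (u x) ∂μ ≤ max (N ^ l) (N ^ m) := by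
  have hg := aux_growth φ Φ l m hφcont hφpos hint hΦ hl hφ3
  have hp := aux_pos φ Φ l m hφpos hl hφ3
  have hmeas := aux_meas φ Φ hφcont hint hΦ
  have hnn : ∀ t, 0 ≤ Φ t := by
    intro t
    have habs : Φ |t| = Φ t := by rw [hΦ, hΦ t, abs_abs]
    by_cases h : t = 0
    · rw [hΦ, h]; simp
    · rw [← habs]; exact (hp _ (abs_pos.2 h)).le
  have hscale : ∀ (v : Ω → ℝ) (s : ℝ), 0 < s → Measurable v →
      Integrable (fun x => Φ (v x)) μ → Integrable (fun x => Φ (s * v x)) μ := by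
    intro v s hs hv hi
    refine (hi.const_mul (max (s ^ l) (s ^ m))).mono'
      (hmeas.comp (hv.const_mul s)).aestronglyMeasurable ?_
    filter_upwards with x
    rw [Real.norm_of_nonneg (hnn _)]
    exact (hg s (v x) hs).2
  have hI : ∃ a > 0, Integrable (fun x => Φ (u x / a)) μ := by
    by_contra! h
    have : {lam : ℝ | 0 < lam ∧ ∫ x, Φ (u x / lam) ∂μ ≤ 1} = Set.Ioi 0 := by
      ext a
      refine ⟨fun ha => ha.1, fun ha => ⟨ha, ?_⟩⟩
      rw [integral_undef (h a ha)]
      exact zero_le_one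
    rw [this, csInf_Ioi] at hN
    exact hNpos.ne' hN
  obtain ⟨a, ha, hia⟩ := hI
  have hi : Integrable (fun x => Φ (u x)) μ := by
    have := hscale _ a ha (hu.div_const a) hia
    simpa only [mul_div_cancel₀ _ ha.ne'] using this
  have hiall : ∀ b > 0, Integrable (fun x => Φ (u x / b)) μ := by
    intro b hb
    have := hscale _ b⁻¹ (inv_pos.2 hb) hu hi
    simpa only [inv_mul_eq_div] using this
  have key : ∀ b > 0, min (b ^ l) (b ^ m) * ∫ x, Φ (u x / b) ∂μ ≤ ∫ x, Φ (u x) ∂μ ∧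
      ∫ x, Φ (u x) ∂μ ≤ max (b ^ l) (b ^ m) * ∫ x, Φ (u x / b) ∂μ := by
    intro b hb
    rw [← integral_const_mul, ← integral_const_mul]
    have e : ∀ x, b * (u x / b) = u x := fun x => mul_div_cancel₀ _ hb.ne'
    constructor
    · refine integral_mono ((hiall b hb).const_mul _) hi fun x => ?_
      have := (hg b (u x / b) hb).1
      rwa [e] at this
    · refine integral_mono hi ((hiall b hb).const_mul _) fun x => ?_
      have := (hg b (u x / b) hb).2
      rwa [e] at this
  have hbdd : BddBelow {lam : ℝ | 0 < lam ∧ ∫ x, Φ (u x / lam) ∂μ ≤ 1} :=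
    ⟨0, fun x hx => hx.1.le⟩
  have hcl : ContinuousAt (fun b : ℝ => b ^ l) N :=
    Real.continuousAt_rpow_const _ _ (Or.inl hNpos.ne')
  have hcm : ContinuousAt (fun b : ℝ => b ^ m) N :=
    Real.continuousAt_rpow_const _ _ (Or.inl hNpos.ne')
  constructor
  · have ht : Tendsto (fun b : ℝ => min (b ^ l) (b ^ m)) (𝓝[<] N) (𝓝 (min (N ^ l) (N ^ m))) :=
      (hcl.tendsto.min hcm.tendsto).mono_left nhdsWithin_le_nhds
    refine le_of_tendsto ht ?_
    filter_upwards [Ioo_mem_nhdsLT hNpos] with b hb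
    have h1 : 1 < ∫ x, Φ (u x / b) ∂μ := by
      by_contra! h
      have : N ≤ b := hN ▸ csInf_le hbdd ⟨hb.1, h⟩
      exact absurd hb.2 (not_lt.2 this)
    refine le_trans ?_ (key b hb.1).1
    exact le_mul_of_one_le_right
      (le_min (Real.rpow_nonneg hb.1.le _) (Real.rpow_nonneg hb.1.le _)) h1.le
  · have hmem := csInf_mem_closure hfin hbdd
    rw [← hN] at hmem
    obtain ⟨w, hw, hwt⟩ := mem_closure_iff_seq_limit.1 hmem
    have ht := (hcl.tendsto.max hcm.tendsto).comp hwt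
    refine ge_of_tendsto' ht fun n => ?_
    refine ((key (w n) (hw n).1).2).trans ?_
    exact mul_le_of_le_one_right
      (le_max_of_le_left (Real.rpow_nonneg (hw n).1.le _)) (hw n).2
end

section
/- Let φ : (0,∞) → (0,∞) be a C¹ function and let 1 < l ≤ m be constants such that l − 1 ≤ (d/dt)(t·φ(t)) / φ(t) ≤ m − 1 for all t > 0 (condition (φ₃)). Then, with Φ(t) = ∫₀^{|t|} s·φ(s) ds, one has l ≤ φ(t)·t²/Φ(t) ≤ m for all t > 0 (condition (φ₃)'). -/
open Real MeasureTheory Set Filter Topology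

/-- Condition (φ₃) implies condition (φ₃)': if `φ` is `C¹` on `(0,∞)` with
`l − 1 ≤ (t·φ(t))'/φ(t) ≤ m − 1` for all `t > 0`, then with
`Φ(t) = ∫₀^{|t|} s·φ(s) ds` one has `l ≤ φ(t)·t²/Φ(t) ≤ m` for all `t > 0`. -/
theorem stmt_2 (φ Φ : ℝ → ℝ) (l m : ℝ) (g : ℝ → ℝ)
    (hφC1 : ContDiffOn ℝ 1 φ (Set.Ioi (0 : ℝ)))
    (hφpos : ∀ t > (0 : ℝ), 0 < φ t)
    -- `g` is the derivative of `t ↦ t·φ(t)` on `(0,∞)`: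
    (hg : ∀ t > (0 : ℝ), HasDerivAt (fun s : ℝ => s * φ s) (g t) t)
    (hint : MeasureTheory.IntegrableOn (fun s : ℝ => s * φ s) (Set.Ioc (0 : ℝ) 1))
    (hΦ : ∀ t : ℝ, Φ t = ∫ s in (0 : ℝ)..|t|, s * φ s)
    (hl : 1 < l) (hlm : l ≤ m)
    -- condition (φ₃):
    (hφ3 : ∀ t > (0 : ℝ), l - 1 ≤ g t / φ t ∧ g t / φ t ≤ m - 1) :
    -- condition (φ₃)':
    ∀ t > (0 : ℝ), l ≤ φ t * t ^ 2 / Φ t ∧ φ t * t ^ 2 / Φ t ≤ m := by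
  intro T hT
  have hcont : ContinuousOn (fun s : ℝ => s * φ s) (Set.Ioi 0) := fun t ht =>
    (hg t ht).continuousAt.continuousWithinAt
  have hintg : ∀ t : ℝ, IntegrableOn (fun s : ℝ => s * φ s) (Set.Ioc 0 t) := by
    intro t
    have h1 : IntegrableOn (fun s : ℝ => s * φ s) (Set.Icc 1 t) :=
      (hcont.mono (fun x hx => lt_of_lt_of_le one_pos hx.1)).integrableOn_Icc
    refine (hint.union h1).mono_set ?_
    intro x hx
    rcases le_total x 1 with h | h
    · exact Or.inl ⟨hx.1, h⟩
    · exact Or.inr ⟨h, hx.2⟩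
  have hII : ∀ t : ℝ, 0 ≤ t → IntervalIntegrable (fun s : ℝ => s * φ s) volume 0 t := by
    intro t ht
    exact (intervalIntegrable_iff_integrableOn_Ioc_of_le ht).2 (hintg t)
  have hgb : ∀ t > (0 : ℝ), (l - 1) * φ t ≤ g t ∧ g t ≤ (m - 1) * φ t := by
    intro t ht
    obtain ⟨h1, h2⟩ := hφ3 t ht
    exact ⟨(le_div_iff₀ (hφpos t ht)).1 h1, (div_le_iff₀ (hφpos t ht)).1 h2⟩
  have hmono : MonotoneOn (fun s : ℝ => s * φ s) (Set.Ioi 0) := by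
    refine monotoneOn_of_deriv_nonneg (convex_Ioi 0) hcont ?_ ?_
    · rw [interior_Ioi]
      exact fun t ht => (hg t ht).differentiableAt.differentiableWithinAt
    · rw [interior_Ioi]
      intro t ht
      rw [(hg t ht).deriv]
      have := (hgb t ht).1
      have h2 := mul_pos (sub_pos.2 hl) (hφpos t ht)
      linarith
  have hHcont : ContinuousOn (fun s : ℝ => s * (s * φ s)) (Set.Icc 0 T) := by
    intro t ht
    rcases eq_or_lt_of_le ht.1 with h0 | h0
    · subst h0
      have hlim : Tendsto (fun s : ℝ => s * (T * φ T)) (𝓝[Set.Icc 0 T] 0) (𝓝 0) := by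
        have : Continuous (fun s : ℝ => s * (T * φ T)) := by fun_prop
        have h := this.tendsto 0
        rw [zero_mul] at h
        exact h.mono_left nhdsWithin_le_nhds
      unfold ContinuousWithinAt
      rw [show (fun s : ℝ => s * (s * φ s)) 0 = 0 from zero_mul _]
      refine tendsto_of_tendsto_of_tendsto_of_le_of_le' tendsto_const_nhds hlim ?_ ?_
      · filter_upwards [self_mem_nhdsWithin] with s hs
        rcases eq_or_lt_of_le hs.1 with h | h
        · simp [← h]
        · have := hφpos s h
          positivity
      · filter_upwards [self_mem_nhdsWithin] with s hs
        rcases eq_or_lt_of_le hs.1 with h | h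
        · simp [← h]
        · exact mul_le_mul_of_nonneg_left (hmono h hT hs.2) hs.1
    · exact (continuousAt_id.mul (hg t h0).continuousAt).continuousWithinAt
  have hFcont : ContinuousOn (fun t : ℝ => ∫ s in (0 : ℝ)..t, s * φ s) (Set.Icc 0 T) := by
    have := intervalIntegral.continuousOn_primitive_interval' (hII T hT.le) Set.left_mem_uIcc
    rwa [Set.uIcc_of_le hT.le] at this
  have hFd : ∀ t > (0 : ℝ), HasDerivAt (fun t : ℝ => ∫ s in (0 : ℝ)..t, s * φ s) (t * φ t) t := by
    intro t ht
    exact intervalIntegral.integral_hasDerivAt_right (hII t ht.le)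
      (hcont.stronglyMeasurableAtFilter isOpen_Ioi t ht) (hg t ht).continuousAt
  have hHd : ∀ t > (0 : ℝ), HasDerivAt (fun s : ℝ => s * (s * φ s)) (1 * (t * φ t) + t * g t) t :=
    fun t ht => (hasDerivAt_id t).mul (hg t ht)
  have key : ∀ c : ℝ, ContinuousOn (fun t : ℝ => t * (t * φ t) - c * ∫ s in (0 : ℝ)..t, s * φ s)
      (Set.Icc 0 T) := fun c => hHcont.sub (continuousOn_const.mul hFcont)
  have keyd : ∀ c : ℝ, ∀ t > (0 : ℝ),
      HasDerivAt (fun t : ℝ => t * (t * φ t) - c * ∫ s in (0 : ℝ)..t, s * φ s)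
      (1 * (t * φ t) + t * g t - c * (t * φ t)) t :=
    fun c t ht => (hHd t ht).sub ((hFd t ht).const_mul c)
  have hlow : l * (∫ s in (0 : ℝ)..T, s * φ s) ≤ T * (T * φ T) := by
    have hm : MonotoneOn (fun t : ℝ => t * (t * φ t) - l * ∫ s in (0 : ℝ)..t, s * φ s)
        (Set.Icc 0 T) := by
      refine monotoneOn_of_deriv_nonneg (convex_Icc 0 T) (key l) ?_ ?_ <;> rw [interior_Icc]
      · exact fun t ht => (keyd l t ht.1).differentiableAt.differentiableWithinAt
      · intro t ht
        rw [(keyd l t ht.1).deriv]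
        nlinarith [mul_le_mul_of_nonneg_left (hgb t ht.1).1 ht.1.le]
    have := hm (Set.left_mem_Icc.2 hT.le) (Set.right_mem_Icc.2 hT.le) hT.le
    simp at this
    linarith
  have hupp : T * (T * φ T) ≤ m * (∫ s in (0 : ℝ)..T, s * φ s) := by
    have hm : AntitoneOn (fun t : ℝ => t * (t * φ t) - m * ∫ s in (0 : ℝ)..t, s * φ s)
        (Set.Icc 0 T) := by
      refine antitoneOn_of_deriv_nonpos (convex_Icc 0 T) (key m) ?_ ?_ <;> rw [interior_Icc]
      · exact fun t ht => (keyd m t ht.1).differentiableAt.differentiableWithinAt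
      · intro t ht
        rw [(keyd m t ht.1).deriv]
        nlinarith [mul_le_mul_of_nonneg_left (hgb t ht.1).2 ht.1.le]
    have := hm (Set.left_mem_Icc.2 hT.le) (Set.right_mem_Icc.2 hT.le) hT.le
    simp at this
    linarith
  have hpos : 0 < ∫ s in (0 : ℝ)..T, s * φ s :=
    intervalIntegral.intervalIntegral_pos_of_pos_on (hII T hT.le)
      (fun x hx => mul_pos hx.1 (hφpos x hx.1)) hT
  rw [hΦ T, abs_of_pos hT, le_div_iff₀ hpos, div_le_iff₀ hpos]
  constructor <;> linarith [show φ T * T ^ 2 = T * (T * φ T) by ring]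
end
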